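/- Let T be a pure quasinormal bounded operator on a nonzero complex Hilbert space H. If it is not the case that both m_{|T|} and ‖T‖ are eigenvalues of |T|, then the set of extended eigenvalues of T is σ_ext(T) = {λ ∈ ℂ : |λ| > m_{|T|}/‖T‖}. -/

import Mathlib

open ContinuousLinearMap

noncomputable section

/-- The modulus `|T| = (T*T)^(1/2)` of a bounded operator on a complex Hilbert space. -/
def modulus {H : Type*} [NormedAddCommGroup H] [InnerProductSpace ℂ H] [CompleteSpace H]
    (T : H →L[ℂ] H) : H →L[ℂ] H :=
  CFC.sqrt (adjoint T ∘L T)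

/-- A bounded operator is quasinormal if it commutes with its modulus. -/
def IsQuasinormal {H : Type*} [NormedAddCommGroup H] [InnerProductSpace ℂ H] [CompleteSpace H]
    (T : H →L[ℂ] H) : Prop :=
  T ∘L modulus T = modulus T ∘L T

/-- `m_T = inf {⟨Tx,x⟩ : ‖x‖ = 1}` (real part of the inner product). -/
def mval {H : Type*} [NormedAddCommGroup H] [InnerProductSpace ℂ H]
    (T : H →L[ℂ] H) : ℝ :=
  sInf {r : ℝ | ∃ x : H, ‖x‖ = 1 ∧ r = T.reApplyInnerSelf x}

/-- The set of intertwining values `Λ_int(R,M)`. -/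
def intertwiningValues {H K : Type*} [NormedAddCommGroup H] [InnerProductSpace ℂ H]
    [NormedAddCommGroup K] [InnerProductSpace ℂ K]
    (R : H →L[ℂ] H) (M : K →L[ℂ] K) : Set ℂ :=
  {l : ℂ | ∃ X : K →L[ℂ] H, X ≠ 0 ∧ R ∘L X = l • (X ∘L M)}

/-- The set of extended eigenvalues `σ_ext(T)`. -/
def extSpectrum {H : Type*} [NormedAddCommGroup H] [InnerProductSpace ℂ H]
    (T : H →L[ℂ] H) : Set ℂ :=
  {l : ℂ | ∃ X : H →L[ℂ] H, X ≠ 0 ∧ T ∘L X = l • (X ∘L T)}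

/-- The set `𝒜_r(R,A)` of operators `L` with `‖Rⁿ(Lx)‖ ≤ c·rⁿ·‖Aⁿx‖` for all `n, x`. -/
def calA {H 𝔏 : Type*} [NormedAddCommGroup H] [InnerProductSpace ℂ H]
    [NormedAddCommGroup 𝔏] [InnerProductSpace ℂ 𝔏]
    (r : ℝ) (R : H →L[ℂ] H) (A : 𝔏 →L[ℂ] 𝔏) : Set (𝔏 →L[ℂ] H) :=
  {L : 𝔏 →L[ℂ] H | ∃ c : ℝ, 0 ≤ c ∧
    ∀ (n : ℕ) (x : 𝔏), ‖(R ^ n) (L x)‖ ≤ c * r ^ n * ‖(A ^ n) x‖}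

/-- An operator is pure if it has no nonzero reducing subspace on which it is normal. -/
def IsPure {H : Type*} [NormedAddCommGroup H] [InnerProductSpace ℂ H] [CompleteSpace H]
    (T : H →L[ℂ] H) : Prop :=
  ∀ M : Submodule ℂ H, IsClosed (M : Set H) → (∀ x ∈ M, T x ∈ M) →
    (∀ x ∈ M, adjoint T x ∈ M) →
    (∀ x ∈ M, T (adjoint T x) = adjoint T (T x)) → M = ⊥

universe u

/-- An operator is subnormal if it has a normal extension on a larger Hilbert space. -/
def IsSubnormal {F : Type*} [NormedAddCommGroup F] [InnerProductSpace ℂ F] [CompleteSpace F]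
    (T : F →L[ℂ] F) : Prop :=
  ∃ (K : Type u) (_ : NormedAddCommGroup K) (_ : InnerProductSpace ℂ K) (_ : CompleteSpace K)
    (j : F →ₗᵢ[ℂ] K) (M : K →L[ℂ] K),
      adjoint M ∘L M = M ∘L adjoint M ∧ ∀ x : F, M (j x) = j (T x)

end

/-!
Write `m = m_{|T|}` and `c = ‖T‖`; quasinormality gives `‖Tⁿx‖ = ‖|T|ⁿx‖`.

If `TX = λXT` and `|λ| c ≤ m`, then `‖|T|ⁿXx‖ ≤ |λ|ⁿ ‖X‖ ‖|T|ⁿx‖ ≤ mⁿ ‖X‖ ‖x‖`. Log-convexity of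
`n ↦ ‖|T|ⁿy‖` forces `‖|T|Xx‖ ≤ m ‖Xx‖`, and with the definition of `m` this makes `Xx` an
eigenvector for `m`. Hence `mⁿ ‖Xx‖ ≤ |λ|ⁿ ‖X‖ ‖|T|ⁿx‖`, so `c⁻ⁿ ‖|T|ⁿx‖` stays away from `0`; by
the mean ergodic theorem for `|T|/c` this happens only if `c` is an eigenvalue too.

Conversely, if `m/c < |λ|`, choose `m < a < |λ| b` with `b < c`. Spectral subspaces of `|T|` below
`a` and above `b` provide an `f` with `‖Tⁿf‖ = O(aⁿ)` and a backward orbit `T* gₙ₊₁ = gₙ`,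
`T* g₀ = 0`, with `‖gₙ‖ = O(b⁻ⁿ)`, and `X = ∑ λ⁻ⁿ ⟨·, gₙ⟩ Tⁿf` satisfies `TX = λXT`. Purity supplies
`g₀`: an operator that commutes with `T` and `T*` and kills `ker T*` is zero, since the closure of
its range reduces `T` to a normal operator.
-/

open Filter Topology InnerProductSpace

section FunctionalCalculus

variable {A : Type*} [CStarAlgebra A] {a : A} {f : ℝ → ℝ}

theorem cfc_ne_zero_of_mem_spectrum {t : ℝ} (ha : IsSelfAdjoint a) (hf : Continuous f)
    (ht : t ∈ spectrum ℝ a) (hft : f t ≠ 0) : cfc f a ≠ 0 := by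
  rw [← cfc_zero ℝ a]
  exact fun h => hft ((cfc_eq_cfc_iff_eqOn ha hf.continuousOn continuousOn_const).1 h ht)

theorem pow_mul_cfc (ha : IsSelfAdjoint a) (hf : Continuous f) (n : ℕ) :
    a ^ n * cfc f a = cfc (fun t => t ^ n * f t) a := by
  rw [cfc_mul _ _ a (by fun_prop) (by fun_prop), cfc_pow_id a n]

end FunctionalCalculus

section Powers

variable {𝕜 E : Type*} [NontriviallyNormedField 𝕜] [SeminormedAddCommGroup E] [NormedSpace 𝕜 E]
  {T X : E →L[𝕜] E} {l : 𝕜}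

theorem norm_pow_apply_le_pow_mul (T : E →L[𝕜] E) (n : ℕ) (x : E) :
    ‖(T ^ n) x‖ ≤ ‖T‖ ^ n * ‖x‖ := by
  induction n with
  | zero => simp
  | succ n ih =>
    rw [pow_succ', pow_succ', mul_apply_eq_comp, mul_assoc]
    exact T.le_opNorm_of_le ih

theorem pow_apply_of_apply_eq_smul {x : E} (hx : T x = l • x) (n : ℕ) :
    (T ^ n) x = l ^ n • x := by
  induction n with
  | zero => simp
  | succ n ih => rw [pow_succ, mul_apply_eq_comp, hx, map_smul, ih, smul_smul, ← pow_succ']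

theorem pow_apply_of_comp_eq_smul (hX : T ∘L X = l • (X ∘L T)) (n : ℕ) (x : E) :
    (T ^ n) (X x) = l ^ n • X ((T ^ n) x) := by
  induction n generalizing x with
  | zero => simp
  | succ n ih =>
    have hx : T (X x) = l • X (T x) := DFunLike.congr_fun hX x
    rw [pow_succ, mul_apply_eq_comp, hx, map_smul, ih, smul_smul, ← pow_succ', mul_apply_eq_comp]

end Powers

section LogConvex

variable {u : ℕ → ℝ}

theorem mul_le_mul_succ_of_sq_le_mul (hu : ∀ n, 0 ≤ u n)
    (hconv : ∀ n, u (n + 1) ^ 2 ≤ u n * u (n + 2)) (n : ℕ) : u 1 * u n ≤ u 0 * u (n + 1) := by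
  induction n with
  | zero => rw [mul_comm]
  | succ n ih =>
    rcases (hu n).eq_or_lt with hn | hn
    · have hn1 : u (n + 1) = 0 :=
        pow_eq_zero_iff two_ne_zero |>.1 (le_antisymm (by simpa [← hn] using hconv n) (sq_nonneg _))
      simpa [hn1] using mul_nonneg (hu 0) (hu (n + 2))
    · refine le_of_mul_le_mul_left ?_ hn
      calc u n * (u 1 * u (n + 1)) = u 1 * u n * u (n + 1) := by ring
        _ ≤ u 0 * u (n + 1) * u (n + 1) := mul_le_mul_of_nonneg_right ih (hu _)
        _ = u 0 * u (n + 1) ^ 2 := by ring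
        _ ≤ u 0 * (u n * u (n + 2)) := mul_le_mul_of_nonneg_left (hconv n) (hu 0)
        _ = u n * (u 0 * u (n + 2)) := by ring

theorem pow_mul_le_pow_mul_of_sq_le_mul (hu : ∀ n, 0 ≤ u n)
    (hconv : ∀ n, u (n + 1) ^ 2 ≤ u n * u (n + 2)) (n : ℕ) : u 1 ^ n * u 0 ≤ u 0 ^ n * u n := by
  induction n with
  | zero => simp
  | succ n ih =>
    calc u 1 ^ (n + 1) * u 0 = u 1 * (u 1 ^ n * u 0) := by ring
      _ ≤ u 1 * (u 0 ^ n * u n) := mul_le_mul_of_nonneg_left ih (hu 1)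
      _ = u 0 ^ n * (u 1 * u n) := by ring
      _ ≤ u 0 ^ n * (u 0 * u (n + 1)) :=
        mul_le_mul_of_nonneg_left (mul_le_mul_succ_of_sq_le_mul hu hconv n) (pow_nonneg (hu 0) n)
      _ = u 0 ^ (n + 1) * u (n + 1) := by ring

theorem le_mul_of_sq_le_mul_of_le_geometric {C m : ℝ} (hu : ∀ n, 0 ≤ u n)
    (hconv : ∀ n, u (n + 1) ^ 2 ≤ u n * u (n + 2)) (hm : 0 ≤ m) (hC : ∀ n, u n ≤ C * m ^ n) :
    u 1 ≤ m * u 0 := by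
  by_contra! hlt
  have hu1 : 0 < u 1 := (mul_nonneg hm (hu 0)).trans_lt hlt
  have hu0 : 0 < u 0 :=
    pos_of_mul_pos_left ((pow_pos hu1 2).trans_le (hconv 0)) (hu 2)
  have hm' : 0 < m := hm.lt_of_ne' fun h => hu1.not_ge (by simpa [h] using hC 1)
  obtain ⟨n, hn⟩ := pow_unbounded_of_one_lt (C / u 0) ((one_lt_div (by positivity)).2 hlt)
  rw [div_pow, div_lt_div_iff₀ hu0 (by positivity)] at hn
  have hle : u 1 ^ n * u 0 ≤ C * (m * u 0) ^ n := calc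
    u 1 ^ n * u 0 ≤ u 0 ^ n * u n := pow_mul_le_pow_mul_of_sq_le_mul hu hconv n
    _ ≤ u 0 ^ n * (C * m ^ n) := by gcongr; exact hC n
    _ = C * (m * u 0) ^ n := by ring
  exact hn.not_ge hle

end LogConvex

section SelfAdjoint

variable {H : Type*} [NormedAddCommGroup H] [InnerProductSpace ℂ H]

theorem mval_mul_norm_sq_le (P : H →L[ℂ] H) (x : H) :
    mval P * ‖x‖ ^ 2 ≤ P.reApplyInnerSelf x := by
  rcases eq_or_ne x 0 with rfl | hx
  · simp [reApplyInnerSelf_apply]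
  have hbdd : BddBelow {r : ℝ | ∃ y : H, ‖y‖ = 1 ∧ r = P.reApplyInnerSelf y} := by
    refine ⟨-‖P‖, ?_⟩
    rintro _ ⟨y, hy, rfl⟩
    refine neg_le_of_abs_le ((RCLike.abs_re_le_norm _).trans ?_)
    simpa [hy] using (norm_inner_le_norm (𝕜 := ℂ) (P y) y).trans
      (mul_le_mul_of_nonneg_right (P.le_opNorm y) (norm_nonneg y))
  have hunit : mval P ≤ P.reApplyInnerSelf ((‖x‖⁻¹ : ℂ) • x) :=
    csInf_le hbdd ⟨_, norm_smul_inv_norm hx, rfl⟩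
  rw [reApplyInnerSelf_smul, norm_inv, Complex.norm_real, norm_norm, inv_pow,
    ← div_eq_inv_mul] at hunit
  exact (le_div_iff₀ (by positivity)).1 hunit

theorem le_mval [Nontrivial H] {P : H →L[ℂ] H} {a : ℝ}
    (ha : ∀ x, a * ‖x‖ ^ 2 ≤ P.reApplyInnerSelf x) : a ≤ mval P := by
  obtain ⟨x, hx⟩ := exists_norm_eq H zero_le_one
  refine le_csInf ⟨_, x, hx, rfl⟩ ?_
  rintro _ ⟨y, hy, rfl⟩
  simpa [hy] using ha y

theorem mval_nonneg {P : H →L[ℂ] H} (hP : 0 ≤ P) : 0 ≤ mval P :=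
  Real.sInf_nonneg (by rintro _ ⟨x, -, rfl⟩; exact ((nonneg_iff_isPositive P).1 hP).2 x)

variable [CompleteSpace H] {P Q : H →L[ℂ] H}

theorem exists_mem_spectrum_lt_of_mval_lt [Nontrivial H] (hP : IsSelfAdjoint P)
    {a : ℝ} (ha : mval P < a) : ∃ t ∈ spectrum ℝ P, t < a := by
  by_contra! hspec
  refine ha.not_ge (le_mval fun x => ?_)
  have hpos := (((algebraMap_le_iff_le_spectrum hP).2 hspec : algebraMap ℝ _ a ≤ P)).2 x
  simpa [reApplyInnerSelf_apply, Algebra.algebraMap_eq_smul_one, inner_sub_left,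
    inner_smul_left_eq_star_smul, ← Complex.ofReal_pow] using hpos

theorem norm_pow_succ_apply_sq_le (hP : IsSelfAdjoint P) (x : H) (n : ℕ) :
    ‖(P ^ (n + 1)) x‖ ^ 2 ≤ ‖(P ^ n) x‖ * ‖(P ^ (n + 2)) x‖ := by
  have hinner : ⟪(P ^ (n + 1)) x, (P ^ (n + 1)) x⟫_ℂ = ⟪(P ^ n) x, (P ^ (n + 2)) x⟫_ℂ := by
    rw [pow_succ' P (n + 1), pow_succ' P n]
    exact hP.isSymmetric _ _
  rw [← inner_self_eq_norm_sq (𝕜 := ℂ), hinner]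
  exact (RCLike.re_le_norm _).trans (norm_inner_le_norm _ _)

theorem apply_eq_smul_of_norm_pow_apply_le (hP : IsSelfAdjoint P) {m C : ℝ} {y : H}
    (hm : 0 ≤ m) (hmy : m * ‖y‖ ^ 2 ≤ P.reApplyInnerSelf y)
    (hC : ∀ n, ‖(P ^ n) y‖ ≤ C * m ^ n) : P y = (m : ℂ) • y := by
  have hPy : ‖P y‖ ≤ m * ‖y‖ := by
    simpa using le_mul_of_sq_le_mul_of_le_geometric (u := fun n => ‖(P ^ n) y‖)
      (fun _ => norm_nonneg _) (norm_pow_succ_apply_sq_le hP y) hm hC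
  have hsq : ‖P y - (m : ℂ) • y‖ ^ 2 ≤ 0 := calc
    ‖P y - (m : ℂ) • y‖ ^ 2 = ‖P y‖ ^ 2 - 2 * (m * P.reApplyInnerSelf y) + m ^ 2 * ‖y‖ ^ 2 := by
      rw [norm_sub_sq (𝕜 := ℂ), inner_smul_right, norm_smul, reApplyInnerSelf_apply]
      simp [mul_pow]
    _ ≤ (m * ‖y‖) ^ 2 - 2 * (m * (m * ‖y‖ ^ 2)) + m ^ 2 * ‖y‖ ^ 2 := by gcongr
    _ = 0 := by ring
  have hzero : ‖P y - (m : ℂ) • y‖ = 0 :=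
    pow_eq_zero_iff two_ne_zero |>.1 (le_antisymm hsq (sq_nonneg _))
  exact sub_eq_zero.1 (norm_eq_zero.1 hzero)

theorem norm_pow_apply_sq (hQ : IsSelfAdjoint Q) (x : H) (n : ℕ) :
    ‖(Q ^ n) x‖ ^ 2 = (Q ^ (2 * n)).reApplyInnerSelf x := by
  have hsym : ⟪(Q ^ n) ((Q ^ n) x), x⟫_ℂ = ⟪(Q ^ n) x, (Q ^ n) x⟫_ℂ :=
    (hQ.pow n).isSymmetric _ _
  rw [reApplyInnerSelf_apply, two_mul, pow_add, mul_apply_eq_comp, hsym, inner_self_eq_norm_sq]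

theorem antitone_reApplyInnerSelf_pow (h0 : 0 ≤ Q) (h1 : Q ≤ 1) (x : H) :
    Antitone fun n => (Q ^ n).reApplyInnerSelf x := by
  intro n k hnk
  have hpos := (CStarAlgebra.pow_antitone h0 h1 hnk).2 x
  simpa [reApplyInnerSelf_apply, inner_sub_left] using hpos

theorem tendsto_average_reApplyInnerSelf_pow (hQ : ‖Q‖ ≤ 1) (hfix : ∀ z, Q z = z → z = 0)
    (x : H) :
    Tendsto (fun N : ℕ => (N : ℝ)⁻¹ * ∑ n ∈ Finset.range N, (Q ^ n).reApplyInnerSelf x)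
      atTop (𝓝 0) := by
  let φ : H →L[ℝ] ℝ := Complex.reCLM ∘L (innerSL ℂ x).restrictScalars ℝ
  have hφ : ∀ n, φ (Q^[n] x) = (Q ^ n).reApplyInnerSelf x := fun n => by
    rw [reApplyInnerSelf_apply, ← inner_re_symm, FunLike.coe_pow_eq_iterate]
    rfl
  have hlim := (φ.continuous.tendsto _).comp (Q.tendsto_birkhoffAverage_orthogonalProjection hQ x)
  have hproj : ((Q.eqLocus (1 : H →L[ℂ] H)).orthogonalProjectionOnto x : H) = 0 :=
    hfix _ ((Q.eqLocus (1 : H →L[ℂ] H)).orthogonalProjectionOnto x).2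
  rw [hproj, map_zero] at hlim
  refine hlim.congr fun N => ?_
  rw [Function.comp_apply, map_birkhoffAverage ℂ ℝ φ]
  simp [birkhoffAverage, birkhoffSum, hφ]

theorem tendsto_pow_apply_zero (h0 : 0 ≤ Q) (h1 : Q ≤ 1)
    (hfix : ∀ z, Q z = z → z = 0) (x : H) : Tendsto (fun n => (Q ^ n) x) atTop (𝓝 0) := by
  set u : ℕ → ℝ := fun n => (Q ^ n).reApplyInnerSelf x
  have hu_bdd : BddBelow (Set.range u) := by
    refine ⟨0, ?_⟩
    rintro _ ⟨n, rfl⟩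
    exact ((nonneg_iff_isPositive _).1 (CStarAlgebra.pow_nonneg h0 n)).2 x
  have hu_inf := tendsto_atTop_ciInf (antitone_reApplyInnerSelf_pow h0 h1 x) hu_bdd
  have hu_lim : Tendsto u atTop (𝓝 0) := by
    have hmean := tendsto_average_reApplyInnerSelf_pow
      ((CStarAlgebra.norm_le_one_iff_of_nonneg Q h0).2 h1) hfix x
    rwa [tendsto_nhds_unique hu_inf.cesaro hmean] at hu_inf
  have hsq : Tendsto (fun n => ‖(Q ^ n) x‖ ^ 2) atTop (𝓝 0) := by
    simp only [norm_pow_apply_sq (.of_nonneg h0) x]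
    exact hu_lim.comp (tendsto_id.const_mul_atTop' two_pos)
  exact tendsto_zero_iff_norm_tendsto_zero.2 (by simpa using hsq.sqrt)

theorem exists_norm_pow_apply_lt (hP : 0 ≤ P) (hP0 : P ≠ 0)
    (hfix : ∀ z, P z = (‖P‖ : ℂ) • z → z = 0) (x : H) {ε : ℝ} (hε : 0 < ε) :
    ∃ n, ‖(P ^ n) x‖ < ε * ‖P‖ ^ n := by
  have hc : 0 < ‖P‖ := norm_pos_iff.2 hP0
  set Q : H →L[ℂ] H := ‖P‖⁻¹ • P with hQ
  have hQ0 : 0 ≤ Q := smul_nonneg (by positivity) hP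
  have hQ1 : Q ≤ 1 := by
    rw [← CStarAlgebra.norm_le_one_iff_of_nonneg Q hQ0, hQ, norm_smul, norm_inv, norm_norm,
      inv_mul_cancel₀ hc.ne']
  have hQfix : ∀ z, Q z = z → z = 0 := fun z hz => hfix z <| by
    rw [Complex.coe_smul, ← inv_smul_eq_iff₀ hc.ne']
    exact hz
  obtain ⟨n, hn⟩ := ((tendsto_pow_apply_zero hQ0 hQ1 hQfix x).norm.eventually
    (gt_mem_nhds (by simpa using hε))).exists
  refine ⟨n, ?_⟩
  rwa [hQ, smul_pow, smul_apply, norm_smul, norm_pow, norm_inv, norm_norm, inv_pow,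
    inv_mul_lt_iff₀' (by positivity)] at hn

end SelfAdjoint

section Modulus

variable {H : Type*} [NormedAddCommGroup H] [InnerProductSpace ℂ H] [CompleteSpace H]
  {T : H →L[ℂ] H}

theorem modulus_nonneg (T : H →L[ℂ] H) : 0 ≤ modulus T :=
  CFC.abs_nonneg T

theorem isSelfAdjoint_modulus (T : H →L[ℂ] H) : IsSelfAdjoint (modulus T) :=
  .of_nonneg (modulus_nonneg T)

theorem norm_modulus (T : H →L[ℂ] H) : ‖modulus T‖ = ‖T‖ :=
  CFC.norm_abs

theorem adjoint_apply_apply_eq_modulus (T : H →L[ℂ] H) (x : H) :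
    adjoint T (T x) = modulus T (modulus T x) :=
  (DFunLike.congr_fun (CFC.abs_mul_abs T) x).symm

theorem norm_modulus_apply (T : H →L[ℂ] H) (x : H) : ‖modulus T x‖ = ‖T x‖ := by
  have hinner : ⟪T x, T x⟫_ℂ = ⟪modulus T x, modulus T x⟫_ℂ := by
    rw [← adjoint_inner_left, adjoint_apply_apply_eq_modulus]
    exact (isSelfAdjoint_modulus T).isSymmetric _ _
  rw [norm_eq_sqrt_re_inner (𝕜 := ℂ), norm_eq_sqrt_re_inner (𝕜 := ℂ) (T x), hinner]

namespace IsQuasinormal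

theorem commute (hT : IsQuasinormal T) : Commute (modulus T) T :=
  hT.symm

theorem commute_adjoint (hT : IsQuasinormal T) : Commute (modulus T) (adjoint T) := by
  have hstar := hT.commute.star_star
  rwa [(isSelfAdjoint_modulus T).star_eq] at hstar

theorem norm_pow_apply (hT : IsQuasinormal T) (n : ℕ) (x : H) :
    ‖(T ^ n) x‖ = ‖(modulus T ^ n) x‖ := by
  induction n generalizing x with
  | zero => rfl
  | succ n ih =>
    rw [pow_succ', mul_apply_eq_comp, ← norm_modulus_apply, ← mul_apply_eq_comp,
      (hT.commute.pow_right n).eq, mul_apply_eq_comp, ih, ← mul_apply_eq_comp, ← pow_succ]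

theorem adjoint_pow_succ_apply (hT : IsQuasinormal T) (n : ℕ) (x : H) :
    adjoint T ((T ^ (n + 1)) x) = (T ^ n) ((modulus T ^ 2) x) := by
  rw [pow_succ', mul_apply_eq_comp, adjoint_apply_apply_eq_modulus, ← mul_apply_eq_comp,
    ← mul_apply_eq_comp, ← mul_apply_eq_comp, ← sq, (hT.commute.pow_pow 2 n).eq]

theorem apply_adjoint_eq_zero (hT : IsQuasinormal T) {x : H} (hx : T x = 0) :
    T (adjoint T x) = 0 := by
  have hPx : modulus T x = 0 := by rw [← norm_eq_zero, norm_modulus_apply, hx, norm_zero]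
  rw [← norm_eq_zero, ← norm_modulus_apply, ← mul_apply_eq_comp, hT.commute_adjoint.eq,
    mul_apply_eq_comp, hPx, map_zero, norm_zero]

theorem injective_of_isPure (hT : IsQuasinormal T) (hpure : IsPure T) :
    Function.Injective T := by
  have hker : T.ker = ⊥ := hpure T.ker T.isClosed_ker
    (fun x (hx : T x = 0) => by simp [hx])
    (fun x hx => hT.apply_adjoint_eq_zero hx)
    (fun x hx => by rw [hT.apply_adjoint_eq_zero hx, show T x = 0 from hx, map_zero])
  exact LinearMap.ker_eq_bot.1 hker

theorem adjoint_mul_selfCommutator_eq_zero (hT : IsQuasinormal T) :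
    adjoint T * (T * adjoint T - adjoint T * T) = 0 := by
  ext x
  have hP : ∀ y, modulus T (adjoint T y) = adjoint T (modulus T y) :=
    DFunLike.congr_fun hT.commute_adjoint
  simp [adjoint_apply_apply_eq_modulus, hP]

end IsQuasinormal

theorem IsPure.eq_zero_of_commute {S : H →L[ℂ] H} (hpure : IsPure T) (hS : Commute S T)
    (hS' : Commute S (adjoint T)) (hker : S * (T * adjoint T - adjoint T * T) = 0) : S = 0 := by
  have hinv : ∀ A : H →L[ℂ] H, Commute S A →
      ∀ x ∈ S.range.topologicalClosure, A x ∈ S.range.topologicalClosure := by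
    intro A hA x hx
    refine map_mem_closure A.continuous hx ?_
    rintro _ ⟨y, rfl⟩
    exact ⟨A y, DFunLike.congr_fun hA y⟩
  have hcomm : (T * adjoint T - adjoint T * T) * S = 0 := by
    rw [← hker]
    exact ((hS.mul_right hS').sub_right (hS'.mul_right hS)).eq.symm
  have hnormal : S.range.topologicalClosure ≤ (T * adjoint T - adjoint T * T).ker := by
    refine Submodule.topologicalClosure_minimal _ ?_ (isClosed_ker _)
    rintro _ ⟨y, rfl⟩
    exact DFunLike.congr_fun hcomm y
  have hbot : S.range.topologicalClosure = ⊥ :=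
    hpure _ S.range.isClosed_topologicalClosure (hinv T hS) (hinv _ hS')
      fun x hx => sub_eq_zero.1 (hnormal hx)
  ext x
  have hx : S x ∈ S.range.topologicalClosure := S.range.le_topologicalClosure ⟨x, rfl⟩
  rwa [hbot] at hx

theorem IsQuasinormal.exists_ker_adjoint_apply_ne_zero (hT : IsQuasinormal T) (hpure : IsPure T)
    {S : H →L[ℂ] H} (hS : Commute S T) (hS' : Commute S (adjoint T)) (hS0 : S ≠ 0) :
    ∃ k, adjoint T k = 0 ∧ S k ≠ 0 := by
  by_contra! hker
  refine hS0 (hpure.eq_zero_of_commute hS hS' ?_)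
  ext x
  exact hker _ (DFunLike.congr_fun hT.adjoint_mul_selfCommutator_eq_zero x)

end Modulus

section SpectralCutoff

/-- The function equal to `t⁻²ⁿ (t - b)` for `t ≥ b` and to `0` for `t ≤ b`. Truncating at `b > 0`
makes it continuous on all of `ℝ`, so that the continuous functional calculus can invert `|T|²ⁿ` on
the spectral subspace above `b`. -/
noncomputable def invSqPowCutoff (b : ℝ) (n : ℕ) (t : ℝ) : ℝ :=
  (max t b ^ (2 * n))⁻¹ * max (t - b) 0

theorem continuous_invSqPowCutoff {b : ℝ} (hb : 0 < b) (n : ℕ) :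
    Continuous (invSqPowCutoff b n) := by
  have hmax : ∀ t, max t b ^ (2 * n) ≠ 0 := fun t => (pow_pos (lt_max_of_lt_right hb) _).ne'
  unfold invSqPowCutoff
  fun_prop (disch := exact hmax _)

theorem sq_mul_invSqPowCutoff_succ {b : ℝ} (hb : 0 < b) (n : ℕ) (t : ℝ) :
    t ^ 2 * invSqPowCutoff b (n + 1) t = invSqPowCutoff b n t := by
  rcases le_total t b with htb | htb
  · simp [invSqPowCutoff, htb]
  · have ht : t ≠ 0 := (hb.trans_le htb).ne'
    simp only [invSqPowCutoff, max_eq_left htb]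
    field_simp
    ring

theorem norm_pow_mul_invSqPowCutoff_le {b c t : ℝ} (hb : 0 < b) (hc : 0 ≤ c) (htc : t ≤ c)
    (n : ℕ) : ‖t ^ n * invSqPowCutoff b n t‖ ≤ b⁻¹ ^ n * c := by
  rcases le_total t b with htb | htb
  · simpa [invSqPowCutoff, htb] using mul_nonneg (inv_nonneg.2 (pow_nonneg hb.le n)) hc
  · have ht : 0 < t := hb.trans_le htb
    have heq : t ^ n * invSqPowCutoff b n t = t⁻¹ ^ n * (t - b) := by
      rw [invSqPowCutoff, max_eq_left htb, max_eq_left (sub_nonneg.2 htb), inv_pow]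
      field_simp
      ring
    rw [heq, Real.norm_of_nonneg (mul_nonneg (by positivity) (sub_nonneg.2 htb))]
    gcongr
    linarith

variable {A : Type*} [CStarAlgebra A] {a : A}

theorem sq_mul_cfc_invSqPowCutoff_succ (ha : IsSelfAdjoint a) {b : ℝ} (hb : 0 < b) (n : ℕ) :
    a ^ 2 * cfc (invSqPowCutoff b (n + 1)) a = cfc (invSqPowCutoff b n) a := by
  rw [pow_mul_cfc ha (continuous_invSqPowCutoff hb _)]
  simp only [sq_mul_invSqPowCutoff_succ hb]

theorem norm_pow_mul_cfc_invSqPowCutoff_le (ha : IsSelfAdjoint a) {b : ℝ} (hb : 0 < b) (n : ℕ) :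
    ‖a ^ n * cfc (invSqPowCutoff b n) a‖ ≤ b⁻¹ ^ n * ‖a‖ := by
  rw [pow_mul_cfc ha (continuous_invSqPowCutoff hb n)]
  refine norm_cfc_le (by positivity) fun t ht => ?_
  have hta : ‖t‖ ≤ ‖a‖ := by simpa only [id, cfc_id ℝ a] using norm_apply_le_norm_cfc id a ht
  exact norm_pow_mul_invSqPowCutoff_le hb (norm_nonneg a) ((Real.le_norm_self t).trans hta) n

end SpectralCutoff

section Orbits

variable {H : Type*} [NormedAddCommGroup H] [InnerProductSpace ℂ H] [CompleteSpace H]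
  {P T : H →L[ℂ] H}

theorem exists_norm_pow_apply_le [Nontrivial H] (hP : 0 ≤ P) {a : ℝ} (ha : mval P < a) :
    ∃ f : H, f ≠ 0 ∧ ∃ C, ∀ n, ‖(P ^ n) f‖ ≤ C * a ^ n := by
  have hP' : IsSelfAdjoint P := .of_nonneg hP
  have ha0 : 0 ≤ a := (mval_nonneg hP).trans ha.le
  obtain ⟨t, ht, hta⟩ := exists_mem_spectrum_lt_of_mval_lt hP' ha
  set φ : ℝ → ℝ := fun t => max (a - t) 0 with hφ
  have hφc : Continuous φ := by fun_prop
  have hφP : cfc φ P ≠ 0 := cfc_ne_zero_of_mem_spectrum hP' hφc ht (by simp [hφ, hta])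
  obtain ⟨k, hk⟩ := DFunLike.ne_iff.1 hφP
  have hbound : ∀ n, ‖P ^ n * cfc φ P‖ ≤ a ^ n * a := fun n => by
    rw [pow_mul_cfc hP' hφc]
    refine norm_cfc_le (by positivity) fun t ht => ?_
    have ht0 : 0 ≤ t := spectrum_nonneg_of_nonneg hP ht
    rcases le_total t a with hta | hta
    · simp only [hφ]
      rw [max_eq_left (sub_nonneg.2 hta),
        Real.norm_of_nonneg (mul_nonneg (by positivity) (sub_nonneg.2 hta))]
      gcongr
      exact sub_le_self a ht0
    · simpa [hφ, hta] using mul_nonneg (pow_nonneg ha0 n) ha0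
  refine ⟨cfc φ P k, hk, a * ‖k‖, fun n => ?_⟩
  calc ‖(P ^ n) (cfc φ P k)‖ ≤ a ^ n * a * ‖k‖ := le_of_opNorm_le _ (hbound n) k
    _ = a * ‖k‖ * a ^ n := by ring

theorem IsQuasinormal.exists_adjoint_backward_orbit (hT : IsQuasinormal T) (hpure : IsPure T)
    {b : ℝ} (hb : 0 < b) (hbT : b < ‖T‖) :
    ∃ g : ℕ → H, g 0 ≠ 0 ∧ adjoint T (g 0) = 0 ∧ (∀ n, adjoint T (g (n + 1)) = g n) ∧
      (∀ n, ⟪g (n + 1), g 0⟫_ℂ = 0) ∧ ∃ C, ∀ n, ‖g n‖ ≤ C * b⁻¹ ^ n := by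
  set P := modulus T with hP
  have hPsa : IsSelfAdjoint P := isSelfAdjoint_modulus T
  set S : ℕ → H →L[ℂ] H := fun n => cfc (invSqPowCutoff b n) P with hS
  have : Nontrivial (H →L[ℂ] H) := nontrivial_of_ne T 0 (norm_pos_iff.1 (hb.trans hbT))
  have hS0 : S 0 ≠ 0 := cfc_ne_zero_of_mem_spectrum hPsa (continuous_invSqPowCutoff hb 0)
    (CStarAlgebra.norm_mem_spectrum_of_nonneg (modulus_nonneg T))
    (by simp [invSqPowCutoff, hP, norm_modulus, hbT])
  have hST : Commute (S 0) (adjoint T) := hT.commute_adjoint.cfc_real _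
  obtain ⟨k, hk, hSk⟩ := hT.exists_ker_adjoint_apply_ne_zero hpure
    (hT.commute.cfc_real _) hST hS0
  have hker : adjoint T (S 0 k) = 0 := by
    rw [← mul_apply_eq_comp, ← hST.eq, mul_apply_eq_comp, hk, map_zero]
  refine ⟨fun n => (T ^ n) (S n k), hSk, hker, fun n => ?_, fun n => ?_, ‖T‖ * ‖k‖, fun n => ?_⟩
  · calc adjoint T ((T ^ (n + 1)) (S (n + 1) k))
        = (T ^ n) ((P ^ 2 * S (n + 1)) k) := hT.adjoint_pow_succ_apply n _
      _ = (T ^ n) (S n k) := by rw [hS, sq_mul_cfc_invSqPowCutoff_succ hPsa hb]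
  · change ⟪(T ^ (n + 1)) (S (n + 1) k), S 0 k⟫_ℂ = 0
    rw [pow_succ', mul_apply_eq_comp, ← adjoint_inner_right, hker, inner_zero_right]
  · calc ‖(T ^ n) (S n k)‖ = ‖(P ^ n * S n) k‖ := hT.norm_pow_apply n _
      _ ≤ b⁻¹ ^ n * ‖P‖ * ‖k‖ :=
          le_of_opNorm_le _ (norm_pow_mul_cfc_invSqPowCutoff_le hPsa hb n) k
      _ = ‖T‖ * ‖k‖ * b⁻¹ ^ n := by rw [hP, norm_modulus]; ring

end Orbits

section RankOneSeries

variable {H : Type*} [NormedAddCommGroup H] [InnerProductSpace ℂ H] [CompleteSpace H]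
  {T : H →L[ℂ] H} {l : ℂ} {f : H} {g : ℕ → H}

theorem summable_smul_rankOne {a b C D : ℝ} (ha : 0 ≤ a) (hab : a < ‖l‖ * b)
    (hf : ∀ n, ‖(T ^ n) f‖ ≤ C * a ^ n) (hg : ∀ n, ‖g n‖ ≤ D * b⁻¹ ^ n) :
    Summable fun n => l⁻¹ ^ n • rankOne ℂ ((T ^ n) f) (g n) := by
  have hlb : 0 < ‖l‖ * b := ha.trans_lt hab
  have hC : 0 ≤ C := by simpa using (norm_nonneg _).trans (hf 0)
  refine .of_norm <| .of_nonneg_of_le (fun _ => norm_nonneg _) (fun n => ?_)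
    ((summable_geometric_of_lt_one (by positivity) ((div_lt_one hlb).2 hab)).mul_left (C * D))
  calc ‖l⁻¹ ^ n • rankOne ℂ ((T ^ n) f) (g n)‖ = ‖l‖⁻¹ ^ n * (‖(T ^ n) f‖ * ‖g n‖) := by
        rw [norm_smul, norm_rankOne, norm_pow, norm_inv]
    _ ≤ ‖l‖⁻¹ ^ n * ((C * a ^ n) * (D * b⁻¹ ^ n)) := by
        gcongr
        exacts [hf n, hg n]
    _ = C * D * (a / (‖l‖ * b)) ^ n := by
        rw [div_eq_mul_inv, mul_inv, mul_pow, mul_pow]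
        ring

theorem mem_extSpectrum_of_summable (hl : l ≠ 0)
    (hsum : Summable fun n => l⁻¹ ^ n • rankOne ℂ ((T ^ n) f) (g n))
    (hf : f ≠ 0) (hg0 : g 0 ≠ 0) (hTg0 : adjoint T (g 0) = 0)
    (hTg : ∀ n, adjoint T (g (n + 1)) = g n) (horth : ∀ n, ⟪g (n + 1), g 0⟫_ℂ = 0) :
    l ∈ extSpectrum T := by
  set F : ℕ → H →L[ℂ] H := fun n => l⁻¹ ^ n • rankOne ℂ ((T ^ n) f) (g n) with hF
  obtain ⟨X, hX⟩ := hsum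
  refine ⟨X, ?_, ?_⟩
  · rintro rfl
    have hX0 : HasSum (fun n => F n (g 0)) (F 0 (g 0)) := hasSum_single 0 fun n hn => by
      obtain ⟨n, rfl⟩ := Nat.exists_eq_succ_of_ne_zero hn
      simp [hF, horth]
    have hF0 : F 0 (g 0) = 0 := hX0.unique (hX.mapL (apply ℂ H (g 0)))
    simp [hF, hf, hg0] at hF0
  · have hstep : ∀ n, l • (F (n + 1) ∘L T) = T ∘L F n := fun n => by
      simp only [hF, smul_comp, comp_smul, rankOne_comp, comp_rankOne, hTg, pow_succ' T,
        mul_apply_eq_comp, smul_smul, pow_succ' l⁻¹, mul_inv_cancel_left₀ hl]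
    have hstart : F 0 ∘L T = 0 := by
      rw [hF, smul_comp, rankOne_comp, hTg0, map_zero, smul_zero]
    have hleft : HasSum (fun n => T ∘L F n) (T ∘L X) := hX.mapL (postcomp H T)
    have hright : HasSum (fun n => l • (F n ∘L T)) (l • (X ∘L T)) :=
      (hX.mapL (precomp H T)).const_smul l
    rw [← hasSum_nat_add_iff' 1] at hright
    simp only [Finset.sum_range_one, hstart, smul_zero, sub_zero, hstep] at hright
    exact hleft.unique hright

end RankOneSeries

section ExtendedEigenvalues

variable {H : Type*} [NormedAddCommGroup H] [InnerProductSpace ℂ H] [CompleteSpace H]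
  {T X : H →L[ℂ] H} {l : ℂ}

namespace IsQuasinormal

theorem norm_modulus_pow_apply_le (hT : IsQuasinormal T) (hX : T ∘L X = l • (X ∘L T))
    (n : ℕ) (x : H) :
    ‖(modulus T ^ n) (X x)‖ ≤ ‖l‖ ^ n * (‖X‖ * ‖(modulus T ^ n) x‖) := by
  rw [← hT.norm_pow_apply, ← hT.norm_pow_apply, pow_apply_of_comp_eq_smul hX, norm_smul, norm_pow]
  gcongr
  exact X.le_opNorm _

theorem modulus_apply_eq_mval_smul (hT : IsQuasinormal T) (hX : T ∘L X = l • (X ∘L T))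
    (hl : ‖l‖ * ‖T‖ ≤ mval (modulus T)) (x : H) :
    modulus T (X x) = (mval (modulus T) : ℂ) • X x := by
  refine apply_eq_smul_of_norm_pow_apply_le (isSelfAdjoint_modulus T) (C := ‖X‖ * ‖x‖)
    (mval_nonneg (modulus_nonneg T)) (mval_mul_norm_sq_le _ _) fun n => ?_
  calc ‖(modulus T ^ n) (X x)‖ ≤ ‖l‖ ^ n * (‖X‖ * ‖(modulus T ^ n) x‖) :=
        hT.norm_modulus_pow_apply_le hX n x
    _ ≤ ‖l‖ ^ n * (‖X‖ * (‖T‖ ^ n * ‖x‖)) := by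
        gcongr
        simpa only [norm_modulus] using norm_pow_apply_le_pow_mul (modulus T) n x
    _ = ‖X‖ * ‖x‖ * (‖l‖ * ‖T‖) ^ n := by ring
    _ ≤ ‖X‖ * ‖x‖ * mval (modulus T) ^ n := by gcongr

theorem exists_modulus_apply_eq_norm_smul (hT : IsQuasinormal T)
    (hX : T ∘L X = l • (X ∘L T)) (hX0 : X ≠ 0) (hm : 0 < mval (modulus T))
    (hl : ‖l‖ * ‖T‖ ≤ mval (modulus T)) : ∃ z, z ≠ 0 ∧ modulus T z = (‖T‖ : ℂ) • z := by
  by_contra! hno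
  obtain ⟨x, hx⟩ := DFunLike.ne_iff.1 hX0
  rw [zero_apply] at hx
  have hXx : 0 < ‖X x‖ := norm_pos_iff.2 hx
  have hmin := hT.modulus_apply_eq_mval_smul hX hl x
  have hP0 : modulus T ≠ 0 := fun h0 =>
    smul_ne_zero (Complex.ofReal_ne_zero.2 hm.ne') hx (by rw [← hmin, h0, zero_apply])
  obtain ⟨n, hn⟩ := exists_norm_pow_apply_lt (modulus_nonneg T) hP0
    (fun z hz => by_contra fun hz0 => hno z hz0 (by rwa [norm_modulus] at hz)) x
    (ε := ‖X x‖ / 2 / ‖X‖) (by positivity)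
  rw [norm_modulus] at hn
  have hlt : mval (modulus T) ^ n * ‖X x‖ < mval (modulus T) ^ n * ‖X x‖ := calc
    mval (modulus T) ^ n * ‖X x‖ = ‖(modulus T ^ n) (X x)‖ := by
        rw [pow_apply_of_apply_eq_smul hmin, norm_smul, norm_pow, Complex.norm_real,
          Real.norm_of_nonneg hm.le]
    _ ≤ ‖l‖ ^ n * (‖X‖ * ‖(modulus T ^ n) x‖) := hT.norm_modulus_pow_apply_le hX n x
    _ ≤ ‖l‖ ^ n * (‖X‖ * (‖X x‖ / 2 / ‖X‖ * ‖T‖ ^ n)) := by gcongr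
    _ = (‖l‖ * ‖T‖) ^ n * (‖X x‖ / 2) := by
        rw [mul_pow]
        field_simp
    _ ≤ mval (modulus T) ^ n * (‖X x‖ / 2) := by gcongr
    _ < mval (modulus T) ^ n * ‖X x‖ := by
        gcongr
        exact half_lt_self hXx
  exact lt_irrefl _ hlt

theorem mval_div_norm_lt_norm_of_mem_extSpectrum (hT : IsQuasinormal T)
    (hinj : Function.Injective T)
    (heig : ¬ ((∃ x : H, x ≠ 0 ∧ modulus T x = (mval (modulus T) : ℂ) • x) ∧
      (∃ x : H, x ≠ 0 ∧ modulus T x = (‖T‖ : ℂ) • x))) (hl : l ∈ extSpectrum T) :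
    mval (modulus T) / ‖T‖ < ‖l‖ := by
  by_contra! hle
  obtain ⟨X, hX0, hX⟩ := hl
  have hm : 0 ≤ mval (modulus T) := mval_nonneg (modulus_nonneg T)
  have hlT : ‖l‖ * ‖T‖ ≤ mval (modulus T) := mul_le_of_le_div₀ hm (norm_nonneg T) hle
  obtain ⟨x, hx⟩ := DFunLike.ne_iff.1 hX0
  have hmin := hT.modulus_apply_eq_mval_smul hX hlT x
  have hTXx : T (X x) ≠ 0 := (map_ne_zero_iff T hinj).2 hx
  have hm0 : mval (modulus T) ≠ 0 := fun h0 => hTXx <| by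
    rw [← norm_eq_zero, ← norm_modulus_apply, hmin, h0, Complex.ofReal_zero, zero_smul, norm_zero]
  exact heig ⟨⟨X x, hx, hmin⟩,
    hT.exists_modulus_apply_eq_norm_smul hX hX0 (hm.lt_of_ne' hm0) hlT⟩

theorem mem_extSpectrum_of_mval_div_norm_lt [Nontrivial H] (hT : IsQuasinormal T)
    (hpure : IsPure T) (hl : mval (modulus T) / ‖T‖ < ‖l‖) : l ∈ extSpectrum T := by
  have hT0 : 0 < ‖T‖ := norm_pos_iff.2 fun h0 => by
    obtain ⟨x, hx⟩ := exists_ne (0 : H)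
    exact (map_ne_zero_iff T (hT.injective_of_isPure hpure)).2 hx (by rw [h0, zero_apply])
  have hm : 0 ≤ mval (modulus T) := mval_nonneg (modulus_nonneg T)
  have hl0 : 0 < ‖l‖ := (div_nonneg hm hT0.le).trans_lt hl
  obtain ⟨a, hma, hal⟩ := exists_between ((div_lt_iff₀ hT0).1 hl)
  have ha : 0 ≤ a := hm.trans hma.le
  obtain ⟨b, hab, hbT⟩ := exists_between ((div_lt_iff₀' hl0).2 hal)
  have hb : 0 < b := (div_nonneg ha hl0.le).trans_lt hab
  obtain ⟨f, hf0, C, hf⟩ := exists_norm_pow_apply_le (modulus_nonneg T) hma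
  obtain ⟨g, hg0, hTg0, hTg, horth, D, hg⟩ := hT.exists_adjoint_backward_orbit hpure hb hbT
  exact mem_extSpectrum_of_summable (norm_pos_iff.1 hl0)
    (summable_smul_rankOne ha ((div_lt_iff₀' hl0).1 hab)
      (fun n => (hT.norm_pow_apply n f).trans_le (hf n)) hg) hf0 hg0 hTg0 hTg horth

end IsQuasinormal

end ExtendedEigenvalues

theorem extSpectrum_pure_quasinormal_of_not_eigenvalues
    {H : Type*} [NormedAddCommGroup H] [InnerProductSpace ℂ H] [CompleteSpace H] [Nontrivial H]
    (T : H →L[ℂ] H) (hTqn : IsQuasinormal T) (hTpure : IsPure T)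
    (heig : ¬ ((∃ x : H, x ≠ 0 ∧ modulus T x = (mval (modulus T) : ℂ) • x) ∧
      (∃ x : H, x ≠ 0 ∧ modulus T x = (‖T‖ : ℂ) • x))) :
    extSpectrum T = {l : ℂ | mval (modulus T) / ‖T‖ < ‖l‖} := by
  ext l
  exact ⟨hTqn.mval_div_norm_lt_norm_of_mem_extSpectrum (hTqn.injective_of_isPure hTpure) heig,
    hTqn.mem_extSpectrum_of_mval_div_norm_lt hTpure⟩
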